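/- arXiv:1612.04213 — 2 statements merged into one kernel-verified Lean document; each statement's English description precedes it below -/
import Mathlib

section
/- For each integer $i \ge 0$, let $l_i$ be the unique positive real number with $\log \coth(l_i/4) = 2^{-i}$. Set $d_0 = \log 2 + \log \coth(l_1/4)$ and, for $i \ge 1$, $d_i = \log \coth(l_i/4) + \log \coth(l_{i+1}/4)$. Then there exists a constant $M > 0$ such that for every $n \ge 1$, $\sinh\Big(\sum_{i=n-1}^{\infty} d_i\Big) \cdot \cosh(l_n/2) \le M$. -/
open Real

/-- with `log coth(lᵢ/4) = 2⁻ⁱ` and the Basmajian gap distances `dᵢ`,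
the quantities `sinh(∑_{i ≥ n-1} dᵢ) cosh(lₙ/2)` are uniformly bounded. -/
theorem stmt_7 (l : ℕ → ℝ) (hl : ∀ i, 0 < l i)
    (hcoth : ∀ i : ℕ, Real.log (Real.cosh (l i / 4) / Real.sinh (l i / 4)) =
      1 / 2 ^ i)
    (d : ℕ → ℝ)
    (hd0 : d 0 = Real.log 2 +
      Real.log (Real.cosh (l 1 / 4) / Real.sinh (l 1 / 4)))
    (hd : ∀ i, 1 ≤ i → d i =
      Real.log (Real.cosh (l i / 4) / Real.sinh (l i / 4)) +
        Real.log (Real.cosh (l (i + 1) / 4) / Real.sinh (l (i + 1) / 4))) :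
    ∃ M : ℝ, 0 < M ∧ ∀ n : ℕ, 1 ≤ n →
      Real.sinh (∑' i : ℕ, d (n - 1 + i)) * Real.cosh (l n / 2) ≤ M := by
  have hgeo : ∀ k : ℕ, HasSum (fun i : ℕ => 3 / 2 * (1 / 2 : ℝ) ^ k * (1 / 2 : ℝ) ^ i)
      (3 / 2 * (1 / 2 : ℝ) ^ k * 2) := fun k => hasSum_geometric_two.mul_left _
  have hle : ∀ i, d i ≤ 3 / 2 * (1 / 2 : ℝ) ^ i := by
    intro i
    rcases Nat.eq_zero_or_pos i with rfl | hi
    · rw [hd0, hcoth]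
      have := Real.log_two_lt_d9
      norm_num
      linarith
    · rw [hd i hi, hcoth, hcoth, pow_succ, one_div_pow]
      apply le_of_eq
      field_simp
      norm_num
  have hnn : ∀ i, 0 ≤ d i := by
    intro i
    rcases Nat.eq_zero_or_pos i with rfl | hi
    · rw [hd0, hcoth]
      have := Real.log_two_gt_d9
      norm_num
      linarith
    · rw [hd i hi, hcoth, hcoth]
      positivity
  refine ⟨6 * Real.exp 6 * ((Real.exp 2 + 1) / 2), by positivity, ?_⟩
  intro n hn
  obtain ⟨t, ht⟩ : ∃ t : ℝ, t = (1 / 2 : ℝ) ^ n := ⟨_, rfl⟩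
  have ht0 : 0 < t := by rw [ht]; positivity
  have ht1 : t ≤ 1 := by rw [ht]; exact pow_le_one₀ (by norm_num) (by norm_num)
  have hS : (∑' i : ℕ, d (n - 1 + i)) ≤ 6 * t := by
    have hle' : ∀ i, d (n - 1 + i) ≤ 3 / 2 * (1 / 2 : ℝ) ^ (n - 1) * (1 / 2 : ℝ) ^ i := by
      intro i
      have := hle (n - 1 + i)
      rwa [pow_add, ← mul_assoc] at this
    have hsum : Summable (fun i => d (n - 1 + i)) :=
      Summable.of_nonneg_of_le (fun i => hnn _) hle' (hgeo (n - 1)).summable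
    have h1 := hasSum_le hle' hsum.hasSum (hgeo (n - 1))
    have h2 : t = (1 / 2 : ℝ) ^ (n - 1) * (1 / 2) := by
      rw [ht, ← pow_succ]; congr 1; omega
    linarith
  have hsinh : Real.sinh (∑' i : ℕ, d (n - 1 + i)) ≤ 6 * t * Real.exp 6 := by
    refine (Real.sinh_le_sinh.2 hS).trans ?_
    have e1 : Real.exp (-(6 * t)) = Real.exp (6 * t) * Real.exp (-(12 * t)) := by
      rw [← Real.exp_add]; congr 1; ring
    have e2 : 1 - 12 * t ≤ Real.exp (-(12 * t)) := by
      have := Real.add_one_le_exp (-(12 * t)); linarith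
    have e3 : Real.exp (6 * t) ≤ Real.exp 6 := Real.exp_le_exp.2 (by linarith)
    have e4 := mul_le_mul_of_nonneg_left e2 (Real.exp_pos (6 * t)).le
    have e5 := mul_le_mul_of_nonneg_left e3 ht0.le
    rw [Real.sinh_eq, e1]
    linarith
  have hs : 0 < Real.sinh (l n / 4) := Real.sinh_pos_iff.2 (by linarith [hl n])
  have hc : Real.cosh (l n / 4) = Real.exp t * Real.sinh (l n / 4) := by
    have h := hcoth n
    rw [← one_div_pow, ← ht] at h
    rw [← h, Real.exp_log (div_pos (Real.cosh_pos _) hs)]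
    field_simp
  have hsq := Real.cosh_sq (l n / 4)
  have h2 : Real.cosh (l n / 2) = Real.cosh (l n / 4) ^ 2 + Real.sinh (l n / 4) ^ 2 := by
    rw [← Real.cosh_two_mul]; congr 1; ring
  have hE : Real.exp t ^ 2 = Real.exp (2 * t) := by
    rw [← Real.exp_nat_mul]; norm_num
  have hE1 : 2 * t + 1 ≤ Real.exp (2 * t) := Real.add_one_le_exp _
  have hE2 : Real.exp (2 * t) ≤ Real.exp 2 := Real.exp_le_exp.2 (by linarith)
  have hcosh : t * Real.cosh (l n / 2) ≤ (Real.exp 2 + 1) / 2 := by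
    rw [hc, mul_pow, hE] at hsq
    rw [h2, hc, mul_pow, hE]
    have h3 : t * Real.sinh (l n / 4) ^ 2 ≤ 1 / 2 := by
      nlinarith [mul_le_mul_of_nonneg_right hE1 (sq_nonneg (Real.sinh (l n / 4)))]
    have h4 := mul_le_mul h3 (add_le_add_left hE2 1) (by positivity) (by norm_num)
    linarith
  calc _ ≤ 6 * t * Real.exp 6 * Real.cosh (l n / 2) :=
        mul_le_mul_of_nonneg_right hsinh (Real.cosh_pos _).le
    _ = 6 * Real.exp 6 * (t * Real.cosh (l n / 2)) := by ring
    _ ≤ _ := mul_le_mul_of_nonneg_left hcosh (by positivity)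
end

section
/- Let $\theta \in (0, \pi/2)$ and let $a, b, \alpha, \beta, L$ be positive real numbers satisfying $\cosh \alpha \cdot \sin \theta = 2$, $\cosh a = \cosh \alpha \cdot \sin \theta$, $\cos \theta = \sinh a \cdot \sinh b$, $\cosh a / \cosh b = \cosh \alpha / \cosh \beta$, and $\sinh L = \sin \theta \cdot \sinh \beta$. Then $L < \operatorname{arsinh} 2$. -/
open Real

/-- in a hyperbolic trirectangle with acute angle `θ`, consecutive
sides `α, b, a, β`, normalization `cosh α sin θ = 2`, and perpendicular `L` with
`sinh L = sin θ sinh β`, one has `L < arsinh 2`. -/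
theorem stmt_13 (θ a b α β L : ℝ) (hθ0 : 0 < θ) (hθ : θ < Real.pi / 2)
    (ha : 0 < a) (hb : 0 < b) (hα : 0 < α) (hβ : 0 < β) (hL : 0 < L)
    (hnorm : Real.cosh α * Real.sin θ = 2)
    (hcosha : Real.cosh a = Real.cosh α * Real.sin θ)
    (hcos : Real.cos θ = Real.sinh a * Real.sinh b)
    (hratio : Real.cosh a / Real.cosh b = Real.cosh α / Real.cosh β)
    (hsinhL : Real.sinh L = Real.sin θ * Real.sinh β) :
    L < Real.arsinh 2 := by
  have hs : 0 < Real.sin θ := Real.sin_pos_of_pos_of_lt_pi hθ0 (by linarith [Real.pi_pos])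
  have h2 : Real.cosh a = 2 := by rw [hcosha, hnorm]
  have hsa : Real.sinh a ^ 2 = 3 := by
    have := Real.cosh_sq a
    rw [h2] at this
    linarith
  have hc : Real.cosh b = Real.cosh β * Real.sin θ := by
    rw [div_eq_div_iff (Real.cosh_pos b).ne' (Real.cosh_pos β).ne', h2] at hratio
    have h3 : 2 * (Real.cosh β * Real.sin θ) = 2 * Real.cosh b := by
      calc 2 * (Real.cosh β * Real.sin θ) = (2 * Real.cosh β) * Real.sin θ := by ring
        _ = (Real.cosh α * Real.sin θ) * Real.cosh b := by rw [hratio]; ring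
        _ = 2 * Real.cosh b := by rw [hnorm]
    linarith
  have hsb : 3 * Real.sinh b ^ 2 ≤ 1 := by
    have h4 : Real.cos θ ^ 2 = 3 * Real.sinh b ^ 2 := by rw [hcos, mul_pow, hsa]
    rw [← h4]
    exact Real.cos_sq_le_one θ
  have hcb : Real.cosh b < 2 := by
    have := Real.cosh_sq b
    nlinarith [Real.cosh_pos b]
  have hlt : Real.sinh L < 2 := by
    have := mul_lt_mul_of_pos_left (Real.sinh_lt_cosh β) hs
    rw [hsinhL]
    linarith
  rw [← Real.sinh_lt_sinh, Real.sinh_arsinh]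
  exact hlt
end
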